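/- Let f, g : ℝ^d → ℝ be bounded measurable functions, let x ∈ ℝ^d and ℓ > 0. Then τ̄_ℓ(f,g) is differentiable at x and |∇τ̄_ℓ(f,g)(x)| ≤ (C/ℓ) · δf(ℓ;x) · δg(ℓ;x), where C := 3 ∫_{ℝ^d} |∇G(r)| dr depends only on the mollifier G. -/

import Mathlib

/-!
The cumulant is unchanged when constants are subtracted from its two arguments, because the
mollifier has integral one. Fixing the base point `x` and replacing `f` and `g` by
`F = f - f x` and `H = g - g x`, the product rule gives
`∇τ̄(x) = ∇(cg (F H))(x) - cg F (x) ∇(cg H)(x) - cg H (x) ∇(cg F)(x)`.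
The gradient of a coarse-grained field is obtained by moving the derivative to the kernel
(`hasFDerivAt_cg`, an instance of differentiation of convolutions); so, if `|a| ≤ M` on the ball of
radius `ℓ` about `x`, then `|cg a (x)| ≤ M` and `|∇(cg a)(x)| ≤ M / ℓ * ∫ |∇G|`. On that ball
`|F| ≤ δf(ℓ;x)` and `|H| ≤ δg(ℓ;x)`, and each of the three terms is therefore at most
`(∫ |∇G|) / ℓ * δf(ℓ;x) * δg(ℓ;x)`.
-/

open MeasureTheory Metric
open scoped RealInnerProductSpace ENNReal

noncomputable section

abbrev Euc (d : ℕ) := EuclideanSpace ℝ (Fin d)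

namespace QT

variable {d : ℕ}

/-- `G` is a mollifier: smooth, nonnegative, supported in the open unit ball, integral one. -/
structure IsMollifier {d : ℕ} (G : Euc d → ℝ) : Prop where
  smooth : ContDiff ℝ (⊤ : ℕ∞) G
  nonneg : ∀ r, 0 ≤ G r
  supp : tsupport G ⊆ ball (0 : Euc d) 1
  integral_one : ∫ r, G r = 1

/-- The rescaled mollifier `G_ℓ(r) = ℓ^{-d} G(r/ℓ)`. -/
def resc (G : Euc d → ℝ) (ℓ : ℝ) (r : Euc d) : ℝ := (ℓ ^ d)⁻¹ * G (ℓ⁻¹ • r)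

/-- Coarse-grained field `ā_ℓ(x) = ∫ G_ℓ(r) a(x+r) dr`. -/
def cg {E : Type*} [NormedAddCommGroup E] [NormedSpace ℝ E]
    (G : Euc d → ℝ) (ℓ : ℝ) (a : Euc d → E) (x : Euc d) : E :=
  ∫ r, resc G ℓ r • a (x + r)

/-- Increment `δa(r;x) = a(x+r) - a(x)`. -/
def incr {E : Type*} [NormedAddCommGroup E] (a : Euc d → E) (r x : Euc d) : E :=
  a (x + r) - a x

/-- `δa(ℓ;x) = sup_{|r|<ℓ} |δa(r;x)|`. -/
def supIncr {E : Type*} [NormedAddCommGroup E] (a : Euc d → E) (ℓ : ℝ) (x : Euc d) : ℝ :=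
  ⨆ r ∈ ball (0 : Euc d) ℓ, ‖incr a r x‖

/-- Second-order coarse-graining cumulant `τ̄_ℓ(f,g)`. -/
def tau2 (G : Euc d → ℝ) (ℓ : ℝ) (f g : Euc d → ℝ) (x : Euc d) : ℝ :=
  cg G ℓ (fun y => f y * g y) x - cg G ℓ f x * cg G ℓ g x

/-- `τ̄_ℓ(ρ, v)` for a scalar density and a vector field. -/
def tauV (G : Euc d → ℝ) (ℓ : ℝ) (ρ : Euc d → ℝ) (v : Euc d → Euc d) (x : Euc d) : Euc d :=
  cg G ℓ (fun y => ρ y • v y) x - cg G ℓ ρ x • cg G ℓ v x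

/-- `i`-th standard basis vector. -/
def e (d : ℕ) (i : Fin d) : Euc d := EuclideanSpace.single i (1 : ℝ)

/-- Partial derivative `∂_i f(x)`. -/
def pd (i : Fin d) (f : Euc d → ℝ) (x : Euc d) : ℝ := fderiv ℝ f x (e d i)

/-- Laplacian. -/
def lap (f : Euc d → ℝ) (x : Euc d) : ℝ := ∑ i, pd i (fun y => pd i f y) x

/-- Gradient matrix `(∇v)_{ij} = ∂_i v_j`. -/
def gradMat (v : Euc d → Euc d) (x : Euc d) : Matrix (Fin d) (Fin d) ℝ :=
  Matrix.of fun i j => pd i (fun y => v y j) x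

/-- Frobenius norm of a matrix. -/
def frobNorm (A : Matrix (Fin d) (Fin d) ℝ) : ℝ := Real.sqrt (∑ i, ∑ j, A i j ^ 2)

/-- Frobenius inner product `A : B`. -/
def frobInner (A B : Matrix (Fin d) (Fin d) ℝ) : ℝ := ∑ i, ∑ j, A i j * B i j

/-- Favre-averaged velocity `ṽ_ℓ = \overline{(ρv)}_ℓ/ρ̄_ℓ` where `ρ̄_ℓ > 0`, `0` otherwise. -/
def favre (G : Euc d → ℝ) (ℓ : ℝ) (ρ : Euc d → ℝ) (v : Euc d → Euc d) (x : Euc d) : Euc d :=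
  if 0 < cg G ℓ ρ x then (cg G ℓ ρ x)⁻¹ • cg G ℓ (fun y => ρ y • v y) x else 0

/-- Favre stress `τ̃_ℓ(v,v) = \overline{(ρ v⊗v)}_ℓ/ρ̄_ℓ − ṽ_ℓ ⊗ ṽ_ℓ`. -/
def favreStress (G : Euc d → ℝ) (ℓ : ℝ) (ρ : Euc d → ℝ) (v : Euc d → Euc d) (x : Euc d) :
    Matrix (Fin d) (Fin d) ℝ :=
  Matrix.of fun i j =>
    (cg G ℓ ρ x)⁻¹ * cg G ℓ (fun y => ρ y * (v y i * v y j)) x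
      - favre G ℓ ρ v x i * favre G ℓ ρ v x j

/-- Deformation work `Π_ℓ = −ρ̄_ℓ ∇ṽ_ℓ : τ̃_ℓ(v,v)`. -/
def deformWork (G : Euc d → ℝ) (ℓ : ℝ) (ρ : Euc d → ℝ) (v : Euc d → Euc d) (x : Euc d) : ℝ :=
  -(cg G ℓ ρ x * frobInner (gradMat (favre G ℓ ρ v) x) (favreStress G ℓ ρ v x))

/-- The periodic box `[0,𝓛]^d`. -/
def box (d : ℕ) (L : ℝ) : Set (Euc d) := {x | ∀ i, x i ∈ Set.Icc (0 : ℝ) L}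

/-- Normalized measure on the periodic box, so that `eLpNorm · p (boxMeasure d 𝓛)`
is the normalized `L^p` norm `(𝓛^{-d}∫_{[0,𝓛]^d}|f|^p)^{1/p}` (ess-sup for `p = ∞`). -/
def boxMeasure (d : ℕ) (L : ℝ) : Measure (Euc d) :=
  (ENNReal.ofReal (L ^ d))⁻¹ • (volume.restrict (box d L))

/-- `𝓛`-periodicity in each coordinate. -/
def PeriodicF {E : Type*} (L : ℝ) (f : Euc d → E) : Prop :=
  ∀ (x : Euc d) (i : Fin d), f (x + EuclideanSpace.single i L) = f x

/-- Quantum stress `Σ = (ħ²/4m²)(Δρ)I − (ħ²/m²)∇√ρ ⊗ ∇√ρ`. -/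
def qStress (hb m : ℝ) (ρ : Euc d → ℝ) (x : Euc d) : Matrix (Fin d) (Fin d) ℝ :=
  Matrix.of fun i j =>
    (hb ^ 2 / (4 * m ^ 2)) * lap ρ x * (if i = j then (1 : ℝ) else 0)
      - (hb ^ 2 / m ^ 2) * (gradient (fun y => Real.sqrt (ρ y)) x i
          * gradient (fun y => Real.sqrt (ρ y)) x j)

/-- Coarse-grained quantum stress `Σ̄_ℓ`. -/
def cgStress (G : Euc d → ℝ) (ℓ hb m : ℝ) (ρ : Euc d → ℝ) (x : Euc d) :
    Matrix (Fin d) (Fin d) ℝ :=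
  Matrix.of fun i j => cg G ℓ (fun z => qStress hb m ρ z i j) x

/-- Row-wise divergence of the coarse-grained quantum stress, `(∇·Σ̄_ℓ)_j = ∑_i ∂_i (Σ̄_ℓ)_{ij}`. -/
def divCgStress (G : Euc d → ℝ) (ℓ hb m : ℝ) (ρ : Euc d → ℝ) (x : Euc d) : Euc d :=
  (EuclideanSpace.equiv (Fin d) ℝ).symm
    (fun j => ∑ i, pd i (fun y => cgStress G ℓ hb m ρ y i j) x)

/-- Quantum baropycnal work `Λ^{(Σ)}_ℓ = −(1/ρ̄_ℓ)(∇·Σ̄_ℓ)·τ̄_ℓ(ρ,v)`. -/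
def qBaroWork (G : Euc d → ℝ) (ℓ hb m : ℝ) (ρ : Euc d → ℝ) (v : Euc d → Euc d) (x : Euc d) : ℝ :=
  -((cg G ℓ ρ x)⁻¹ * ⟪divCgStress G ℓ hb m ρ x, tauV G ℓ ρ v x⟫)

end QT

namespace QT

variable {d : ℕ} {G : Euc d → ℝ} {ℓ : ℝ}

lemma resc_contDiff (hG : IsMollifier G) : ContDiff ℝ 1 (resc G ℓ) := by
  have h1 : ContDiff ℝ 1 G := hG.smooth.of_le (by exact_mod_cast le_top)
  unfold resc
  exact contDiff_const.mul (h1.comp (contDiff_id.const_smul ℓ⁻¹))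

lemma inv_smul_mem_ball (hℓ : 0 < ℓ) {r : Euc d} (h : ℓ⁻¹ • r ∈ ball (0 : Euc d) 1) :
    r ∈ ball (0 : Euc d) ℓ := by
  rw [mem_ball_zero_iff, norm_smul, norm_inv, Real.norm_of_nonneg hℓ.le,
    inv_mul_lt_iff₀ hℓ, mul_one] at h
  simpa using h

lemma resc_eq_zero (hG : IsMollifier G) (hℓ : 0 < ℓ) {r : Euc d} (hr : r ∉ ball (0 : Euc d) ℓ) :
    resc G ℓ r = 0 := by
  have : G (ℓ⁻¹ • r) = 0 := by
    by_contra h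
    exact hr (inv_smul_mem_ball hℓ (hG.supp (subset_tsupport G h)))
  simp [resc, this]

lemma fderiv_resc (r : Euc d) :
    fderiv ℝ (resc G ℓ) r = (ℓ ^ d)⁻¹ • ℓ⁻¹ • fderiv ℝ G (ℓ⁻¹ • r) := by
  have h2 : resc G ℓ = (ℓ ^ d)⁻¹ • (fun r => G (ℓ⁻¹ • r)) := by
    ext r; simp [resc]
  rw [h2, fderiv_const_smul_field, Pi.smul_apply, fderiv_comp_smul]

lemma fderiv_resc_eq_zero (hG : IsMollifier G) (hℓ : 0 < ℓ) {r : Euc d}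
    (hr : r ∉ ball (0 : Euc d) ℓ) : fderiv ℝ (resc G ℓ) r = 0 := by
  have : fderiv ℝ G (ℓ⁻¹ • r) = 0 := by
    by_contra h
    exact hr (inv_smul_mem_ball hℓ (hG.supp (support_fderiv_subset ℝ h)))
  simp [fderiv_resc, this]

lemma resc_hasCompactSupport (hG : IsMollifier G) (hℓ : 0 < ℓ) :
    HasCompactSupport (resc G ℓ) := by
  refine HasCompactSupport.of_support_subset_isCompact (isCompact_closedBall (0 : Euc d) ℓ) ?_
  intro r hr
  by_contra h
  exact hr (resc_eq_zero hG hℓ fun h' => h (ball_subset_closedBall h'))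

lemma resc_integrable (hG : IsMollifier G) (hℓ : 0 < ℓ) : Integrable (resc G ℓ) :=
  (resc_contDiff hG).continuous.integrable_of_hasCompactSupport (resc_hasCompactSupport hG hℓ)

lemma resc_nonneg (hG : IsMollifier G) (hℓ : 0 < ℓ) (r : Euc d) : 0 ≤ resc G ℓ r :=
  mul_nonneg (by positivity) (hG.nonneg _)

lemma integral_resc (hG : IsMollifier G) (hℓ : 0 < ℓ) : ∫ r, resc G ℓ r = 1 := by
  unfold resc
  rw [integral_const_mul, Measure.integral_comp_inv_smul_of_nonneg volume G hℓ.le,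
    hG.integral_one]
  simp [hℓ.ne']

lemma integrable_norm_fderiv_resc (hG : IsMollifier G) (hℓ : 0 < ℓ) :
    Integrable (fun r => ‖fderiv ℝ (resc G ℓ) r‖) :=
  (((resc_contDiff hG).continuous_fderiv one_ne_zero).integrable_of_hasCompactSupport
    ((resc_hasCompactSupport hG hℓ).fderiv ℝ)).norm

lemma norm_gradient (h : Euc d → ℝ) (y : Euc d) : ‖gradient h y‖ = ‖fderiv ℝ h y‖ := by
  simp [gradient]

/-- The scaling identity `∫ |∇G_ℓ| = ℓ⁻¹ ∫ |∇G|`. -/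
lemma integral_norm_fderiv_resc (hℓ : 0 < ℓ) :
    ∫ r, ‖fderiv ℝ (resc G ℓ) r‖ = (∫ r, ‖gradient G r‖) / ℓ := by
  simp_rw [fderiv_resc, norm_smul, norm_gradient]
  rw [integral_const_mul, integral_const_mul,
    Measure.integral_comp_inv_smul_of_nonneg volume (fun r => ‖fderiv ℝ G r‖) hℓ.le]
  simp only [norm_inv, norm_pow, Real.norm_of_nonneg hℓ.le, finrank_euclideanSpace,
    Fintype.card_fin, smul_eq_mul]
  field_simp

lemma integrable_resc_smul (hG : IsMollifier G) (hℓ : 0 < ℓ) {a : Euc d → ℝ} (ham : Measurable a)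
    {C : ℝ} (hab : ∀ y, |a y| ≤ C) (y : Euc d) :
    Integrable (fun r => resc G ℓ r • a (y + r)) :=
  (resc_integrable hG hℓ).mul_bdd (c := C)
    (ham.comp (measurable_const_add y)).aestronglyMeasurable (.of_forall fun _ => hab _)

lemma cg_sub_const (hG : IsMollifier G) (hℓ : 0 < ℓ) {a : Euc d → ℝ} (ham : Measurable a)
    {C : ℝ} (hab : ∀ y, |a y| ≤ C) (c : ℝ) (y : Euc d) :
    cg G ℓ (fun z => a z - c) y = cg G ℓ a y - c := by
  unfold cg
  simp_rw [smul_sub]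
  rw [integral_sub (integrable_resc_smul hG hℓ ham hab y) ((resc_integrable hG hℓ).smul_const c),
    integral_smul_const, integral_resc hG hℓ, one_smul]

/-- The cumulant does not see additive constants. -/
lemma tau2_sub_const (hG : IsMollifier G) (hℓ : 0 < ℓ) {f g : Euc d → ℝ}
    (hfm : Measurable f) (hgm : Measurable g) {Cf Cg : ℝ}
    (hfb : ∀ y, |f y| ≤ Cf) (hgb : ∀ y, |g y| ≤ Cg) (c c' : ℝ) (y : Euc d) :
    tau2 G ℓ (fun z => f z - c) (fun z => g z - c') y = tau2 G ℓ f g y := by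
  have hfg : ∀ y, |f y * g y| ≤ Cf * Cg := fun y => by
    rw [abs_mul]
    exact mul_le_mul (hfb y) (hgb y) (abs_nonneg _) ((abs_nonneg _).trans (hfb y))
  have h1 : cg G ℓ (fun z => (f z - c) * (g z - c')) y
      = cg G ℓ (fun z => f z * g z) y - c' * cg G ℓ f y - c * cg G ℓ g y + c * c' := by
    unfold cg
    have e1 : Integrable (fun r => resc G ℓ r • (f (y + r) * g (y + r))) :=
      integrable_resc_smul hG hℓ (hfm.mul hgm) hfg y
    have e2 := (integrable_resc_smul hG hℓ hfm hfb y).const_mul c'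
    have e3 := (integrable_resc_smul hG hℓ hgm hgb y).const_mul c
    have e4 := (resc_integrable hG hℓ).mul_const (c * c')
    calc ∫ r, resc G ℓ r • ((f (y + r) - c) * (g (y + r) - c'))
        = ∫ r, (((resc G ℓ r • (f (y + r) * g (y + r)) - c' * (resc G ℓ r • f (y + r)))
            - c * (resc G ℓ r • g (y + r))) + resc G ℓ r * (c * c')) := by
          congr 1; ext r; simp only [smul_eq_mul]; ring
      _ = _ := by
          rw [integral_add (by exact (e1.sub e2).sub e3) e4,
            integral_sub (by exact e1.sub e2) e3, integral_sub e1 e2, integral_const_mul, integral_const_mul, integral_mul_const,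
            integral_resc hG hℓ, one_mul]
  rw [tau2, tau2, h1, cg_sub_const hG hℓ hfm hfb, cg_sub_const hG hℓ hgm hgb]
  ring

/-- The derivative of a coarse-grained field falls on the kernel: with `z = y + r`,
`cg a y = ∫ G_ℓ(z - y) a(z) dz` is the convolution of `a` with the reflected kernel. -/
lemma hasFDerivAt_cg (hG : IsMollifier G) (hℓ : 0 < ℓ) {a : Euc d → ℝ} (ham : Measurable a)
    {C : ℝ} (hab : ∀ y, |a y| ≤ C) (x : Euc d) :
    HasFDerivAt (cg G ℓ a) (∫ r, a (x + r) • -fderiv ℝ (resc G ℓ) r) x := by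
  have hloc : LocallyIntegrable a volume :=
    (locallyIntegrable_const C).mono ham.aestronglyMeasurable
      (.of_forall fun y => (hab y).trans (le_abs_self C))
  have hκ : ContDiff ℝ 1 (fun t => resc G ℓ (-t)) := (resc_contDiff hG).comp contDiff_neg
  have hκc : HasCompactSupport (fun t => resc G ℓ (-t)) :=
    (resc_hasCompactSupport hG hℓ).comp_homeomorph (Homeomorph.neg (Euc d))
  have key := hκc.hasFDerivAt_convolution_left (ContinuousLinearMap.lsmul ℝ ℝ) hκ hloc x
  have h1 : cg G ℓ a = convolution (fun t => resc G ℓ (-t)) a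
      (ContinuousLinearMap.lsmul ℝ ℝ) volume := by
    ext y
    simp only [cg, convolution, ContinuousLinearMap.lsmul_apply]
    rw [← integral_neg_eq_self]
    simp [sub_eq_add_neg]
  have h2 : ∫ r, a (x + r) • -fderiv ℝ (resc G ℓ) r =
      convolution (fderiv ℝ fun t => resc G ℓ (-t)) a
        (ContinuousLinearMap.precompL (Euc d) (ContinuousLinearMap.lsmul ℝ ℝ)) volume x := by
    simp only [convolution]
    rw [← integral_neg_eq_self]
    congr 1
    ext t v
    have : fderiv ℝ (fun t => resc G ℓ (-t)) t = -fderiv ℝ (resc G ℓ) (-t) := by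
      simpa using fderiv_comp_smul (𝕜 := ℝ) (f := resc G ℓ) (x := t) (-1)
    simp [this, sub_eq_add_neg, mul_comm]
  rw [h1, h2]
  exact key

lemma abs_cg_le (hG : IsMollifier G) (hℓ : 0 < ℓ) {a : Euc d → ℝ} {M : ℝ} {x : Euc d}
    (h : ∀ r ∈ ball (0 : Euc d) ℓ, |a (x + r)| ≤ M) : |cg G ℓ a x| ≤ M := by
  have h1 : ‖∫ r, resc G ℓ r • a (x + r)‖ ≤ ∫ r, resc G ℓ r * M := by
    refine norm_integral_le_of_norm_le ((resc_integrable hG hℓ).mul_const M) (.of_forall fun r => ?_)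
    rw [norm_smul, Real.norm_of_nonneg (resc_nonneg hG hℓ r)]
    by_cases hr : r ∈ ball (0 : Euc d) ℓ
    · exact mul_le_mul_of_nonneg_left (h r hr) (resc_nonneg hG hℓ r)
    · simp [resc_eq_zero hG hℓ hr]
  rwa [integral_mul_const, integral_resc hG hℓ, one_mul] at h1

/-- The integral bounded here is the derivative of `cg G ℓ a` at `x` given by `hasFDerivAt_cg`. -/
lemma norm_fderiv_cg_le (hG : IsMollifier G) (hℓ : 0 < ℓ) {a : Euc d → ℝ} {M : ℝ} {x : Euc d}
    (h : ∀ r ∈ ball (0 : Euc d) ℓ, |a (x + r)| ≤ M) :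
    ‖∫ r, a (x + r) • -fderiv ℝ (resc G ℓ) r‖ ≤ M * ((∫ r, ‖gradient G r‖) / ℓ) := by
  rw [← integral_norm_fderiv_resc hℓ, ← integral_const_mul]
  refine norm_integral_le_of_norm_le ((integrable_norm_fderiv_resc hG hℓ).const_mul M)
    (.of_forall fun r => ?_)
  rw [norm_smul, norm_neg]
  by_cases hr : r ∈ ball (0 : Euc d) ℓ
  · exact mul_le_mul_of_nonneg_right (h r hr) (norm_nonneg _)
  · simp [fderiv_resc_eq_zero hG hℓ hr]

/-- Boundedness of `a` makes the real supremum `supIncr` a genuine upper bound. -/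
lemma abs_incr_le_supIncr {a : Euc d → ℝ} {C : ℝ} (hab : ∀ y, |a y| ≤ C) (x : Euc d)
    {r : Euc d} (hr : r ∈ ball (0 : Euc d) ℓ) : |a (x + r) - a x| ≤ supIncr a ℓ x := by
  have hC : 0 ≤ C := (abs_nonneg _).trans (hab x)
  have hb : ∀ s, ‖incr a s x‖ ≤ 2 * C := fun s => by
    have := abs_sub (a (x + s)) (a x)
    rw [incr, Real.norm_eq_abs]
    linarith [hab (x + s), hab x]
  have h2 : BddAbove (Set.range fun s => ⨆ _ : s ∈ ball (0 : Euc d) ℓ, ‖incr a s x‖) := by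
    refine ⟨2 * C, ?_⟩
    rintro _ ⟨s, rfl⟩
    exact Real.iSup_le (fun _ => hb s) (by positivity)
  refine le_trans ?_ (le_ciSup h2 r)
  simp [hr, incr]

end QT

open QT in
/-- `τ̄_ℓ(f,g)` is differentiable and
`|∇τ̄_ℓ(f,g)(x)| ≤ (C/ℓ) δf(ℓ;x) δg(ℓ;x)` with `C = 3∫|∇G|`. -/
theorem tau2_differentiable_and_gradient_le {d : ℕ} (hd : 1 ≤ d)
    (G : Euc d → ℝ) (hG : IsMollifier G)
    (f g : Euc d → ℝ) (hfm : Measurable f) (hgm : Measurable g)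
    (Cf Cg : ℝ) (hfb : ∀ y, |f y| ≤ Cf) (hgb : ∀ y, |g y| ≤ Cg)
    (x : Euc d) (ℓ : ℝ) (hℓ : 0 < ℓ) :
    DifferentiableAt ℝ (tau2 G ℓ f g) x ∧
    ‖gradient (tau2 G ℓ f g) x‖ ≤
      (3 * ∫ r, ‖gradient G r‖) / ℓ * (supIncr f ℓ x * supIncr g ℓ x) := by
  set F : Euc d → ℝ := fun z => f z - f x with hF
  set H : Euc d → ℝ := fun z => g z - g x with hH
  set δf := supIncr f ℓ x
  set δg := supIncr g ℓ x
  have hFm : Measurable F := hfm.sub_const _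
  have hHm : Measurable H := hgm.sub_const _
  have hFb : ∀ y, |F y| ≤ Cf + Cf := fun y =>
    (abs_sub _ _).trans (add_le_add (hfb y) (hfb x))
  have hHb : ∀ y, |H y| ≤ Cg + Cg := fun y =>
    (abs_sub _ _).trans (add_le_add (hgb y) (hgb x))
  have hFHb : ∀ y, |F y * H y| ≤ (Cf + Cf) * (Cg + Cg) := fun y => by
    rw [abs_mul]
    exact mul_le_mul (hFb y) (hHb y) (abs_nonneg _) ((abs_nonneg _).trans (hFb y))
  have bF : ∀ r ∈ ball (0 : Euc d) ℓ, |F (x + r)| ≤ δf := fun r hr => abs_incr_le_supIncr hfb x hr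
  have bH : ∀ r ∈ ball (0 : Euc d) ℓ, |H (x + r)| ≤ δg := fun r hr => abs_incr_le_supIncr hgb x hr
  have hδf : 0 ≤ δf := (abs_nonneg _).trans (bF 0 (mem_ball_self hℓ))
  have bFH : ∀ r ∈ ball (0 : Euc d) ℓ, |F (x + r) * H (x + r)| ≤ δf * δg := fun r hr => by
    rw [abs_mul]
    exact mul_le_mul (bF r hr) (bH r hr) (abs_nonneg _) hδf
  have htau : tau2 G ℓ f g = tau2 G ℓ F H :=
    funext fun y => (tau2_sub_const hG hℓ hfm hgm hfb hgb (f x) (g x) y).symm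
  have D := (hasFDerivAt_cg hG hℓ (hFm.mul hHm) hFHb x).sub
    ((hasFDerivAt_cg hG hℓ hFm hFb x).mul (hasFDerivAt_cg hG hℓ hHm hHb x))
  have D' : HasFDerivAt (tau2 G ℓ F H) _ x := D
  rw [htau]
  refine ⟨D'.differentiableAt, ?_⟩
  rw [norm_gradient, D'.fderiv]
  set I := (∫ r, ‖gradient G r‖) / ℓ with hI
  have hI0 : 0 ≤ I := div_nonneg (integral_nonneg fun _ => norm_nonneg _) hℓ.le
  have n1 := norm_fderiv_cg_le hG hℓ (a := fun z => F z * H z) bFH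
  have n2 := norm_fderiv_cg_le hG hℓ bF
  have n3 := norm_fderiv_cg_le hG hℓ bH
  have c2 := abs_cg_le hG hℓ bF
  have c3 := abs_cg_le hG hℓ bH
  refine (norm_sub_le _ _).trans ((add_le_add n1 ((norm_add_le _ _).trans ?_)).trans_eq
    (b := δf * δg * I + (δf * (δg * I) + δg * (δf * I))) ?_)
  · rw [norm_smul, norm_smul]
    exact add_le_add
      (mul_le_mul c2 n3 (norm_nonneg _) hδf)
      (mul_le_mul c3 n2 (norm_nonneg _) ((abs_nonneg _).trans c3))
  · rw [hI]; ring
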